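/- Let s be an N-crossing one-step sequence over {1,…,m}. Then the strictly increasing sequence 1, 2, …, m belongs to squeeze^{N²}(s), i.e., after at most N² applications of the squeeze operation all z-motions of s can be removed, yielding a monotone one-way sequence. -/

import Mathlib

def OneStep (a : ℕ → ℕ) (n m : ℕ) : Prop :=
  1 ≤ n ∧ a 1 = 1 ∧ a n = m ∧
  (∀ i, 1 ≤ i → i ≤ n → 1 ≤ a i ∧ a i ≤ m) ∧
  (∀ i, 1 ≤ i → i < n → a (i + 1) = a i + 1 ∨ a i = a (i + 1) + 1)

def KCrossing (a : ℕ → ℕ) (n K : ℕ) : Prop :=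
  ∀ x, ((Finset.Icc 1 n).filter fun i => a i = x).card ≤ K

def IsReversal (a : ℕ → ℕ) (n r : ℕ) : Prop :=
  1 < r ∧ r < n ∧ a (r + 1) = a (r - 1)

def ConsecRev (a : ℕ → ℕ) (n r r' : ℕ) : Prop :=
  IsReversal a n r ∧ IsReversal a n r' ∧ r < r' ∧
  ∀ s, r < s → s < r' → ¬ IsReversal a n s

def ZInstance (a : ℕ → ℕ) (n e r r' f : ℕ) : Prop :=
  ConsecRev a n r r' ∧ 1 ≤ e ∧ e < r ∧ r' < f ∧ f ≤ n ∧
  a e = a r' ∧ a f = a r ∧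
  (∀ s, e < s → s < r → ¬ IsReversal a n s) ∧
  (∀ s, r' < s → s < f → ¬ IsReversal a n s)

/-- The 1-based indexing function of a list of naturals. -/
def seqAt (s : List ℕ) : ℕ → ℕ := fun i => s.getD (i - 1) 0

/-- A z-motion of the sequence `s`, as a quadruple `(e, r, r', f)`:
span `e..f`, reversals `r < r'`. -/
def QuadZ (s : List ℕ) (q : ℕ × ℕ × ℕ × ℕ) : Prop :=
  ZInstance (seqAt s) s.length q.1 q.2.1 q.2.2.1 q.2.2.2

/-- Removing the z-motion spanning indices `e..f` with first reversal `r`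
(1-based) yields `a₁,…,a_r, a_{f+1},…,a_n`. -/
def removeSpan (s : List ℕ) (r f : ℕ) : List ℕ := s.take r ++ s.drop f

/-- One squeeze step: remove some pairwise (index-)disjoint z-motions of `s`,
listed from right to left. -/
def SqueezeStep (s s' : List ℕ) : Prop :=
  ∃ L : List (ℕ × ℕ × ℕ × ℕ),
    (∀ q ∈ L, QuadZ s q) ∧
    L.Pairwise (fun q q' => q'.2.2.2 < q.1) ∧
    s' = L.foldl (fun t q => removeSpan t q.2.1 q.2.2.2) s

/-- `k`-fold iteration of the squeeze operation. -/
def SqueezeIter : ℕ → List ℕ → List ℕ → Prop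
  | 0, s, s' => s = s'
  | k + 1, s, s' => ∃ t, SqueezeStep s t ∧ SqueezeIter k t s'

/-!
A sequence is determined by its turning points, and four consecutive turning points `a, p, q, d`
form a z-motion when the middle run from `p` to `q` lies within the runs around it. In every squeeze
step the z-motions are removed greedily from left to right. If `p, q` is the middle run of a
z-motion present after the step, then either it contains the middle run of a removed z-motion, all
of whose values lost a crossing, or it was already the middle run of a z-motion before the step and
could not be removed because its end value `q` lay on the middle run of the removed z-motion just
before it, so that `q` lost a crossing. Hence every z-motion present after `t` steps has a value `x`
on its middle run with `N * count x + count q ≤ N ^ 2 + N - t`; the factor `N` pays for the change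
of end value in the first case. Both counts are positive, so after `N ^ 2` steps no z-motion is
left, and a path from `1` to `m` within `[1, m]` without z-motions is monotone.
-/

section Zigzag

variable {α : Type*} [LinearOrder α] {a b c d e f p q : α} {B : Set α} {l o : List α}
  {X : List (α × α)}

/-- A path running from `a` to `b` and then to `c` turns back at `b`. -/
def IsTurn (a b c : α) : Prop := (a < b ∧ c < b) ∨ (b < a ∧ b < c)

/-- The consecutive turning points `a, b, c, d` trace a z-motion with reversals at `b` and `c`:
the middle run from `b` to `c` is covered by the runs before and after it. -/
def IsZShape (a b c d : α) : Prop := (a ≤ c ∧ c < b ∧ b ≤ d) ∨ (d ≤ b ∧ b < c ∧ c ≤ a)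

/-- A list of turning points: each entry differs from the previous one, and the path through them
turns back at every inner entry. -/
inductive IsZigzag : List α → Prop
  | singleton (a : α) : IsZigzag [a]
  | pair {a b : α} : a ≠ b → IsZigzag [a, b]
  | cons {a b c : α} {l : List α} :
      IsTurn a b c → IsZigzag (b :: c :: l) → IsZigzag (a :: b :: c :: l)

/-- `HasZShape v p q` means that `p, q` are the two middle entries of four consecutive entries of
`v` forming a z-motion, so that `q` is where the removable motion turns the second time. -/
inductive HasZShape : List α → α → α → Prop
  | head {a p q d : α} {l : List α} : IsZShape a p q d → HasZShape (a :: p :: q :: d :: l) p q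
  | tail {a p q : α} {l : List α} : HasZShape l p q → HasZShape (a :: l) p q

/-- The left-to-right greedy choice of disjoint z-motions. `Sweep a B l o X` means that, from the
turning point `a` with further turning points `l`, the choice leaves the turning points `o` and
removes the z-motions whose middle runs are the pairs in `X`. The set `B` consists of the values
of the run starting at `a` that already belong to a removed z-motion; a z-motion `a, b, c, d` is
disjoint from that one iff its starting value `c` is not in `B`. -/
inductive Sweep : α → Set α → List α → List α → List (α × α) → Prop
  | nil {a : α} {B : Set α} : Sweep a B [] [] []
  | keep {a b : α} {B : Set α} {l o : List α} {X : List (α × α)} :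
      (∀ c d l', l = c :: d :: l' → IsZShape a b c d → c ∈ B) →
      Sweep b (B ∩ {b}) l o X → Sweep a B (b :: l) (b :: o) X
  | remove {a b c d : α} {B : Set α} {l o : List α} {X : List (α × α)} :
      IsZShape a b c d → c ∉ B → Sweep c (Set.uIcc b c) (d :: l) o X →
      Sweep a B (b :: c :: d :: l) o ((b, c) :: X)

theorem IsTurn.extend (h : IsTurn a b c) (hc : c ∈ Set.uIcc b d) : IsTurn a b d := by
  grind [IsTurn, Set.mem_uIcc]

theorem IsTurn.ne_left (h : IsTurn a b c) : a ≠ b := by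
  grind [IsTurn]

namespace IsZShape

theorem isTurn_left (h : IsZShape a b c d) : IsTurn a b c := by
  grind [IsZShape, IsTurn]

theorem isTurn_right (h : IsZShape a b c d) : IsTurn b c d := by
  grind [IsZShape, IsTurn]

theorem mem_uIcc_left (h : IsZShape a b c d) : c ∈ Set.uIcc a b := by
  grind [IsZShape, Set.mem_uIcc]

theorem mem_uIcc_right (h : IsZShape a b c d) : b ∈ Set.uIcc c d := by
  grind [IsZShape, Set.mem_uIcc]

theorem mem_uIcc_outer_left (h : IsZShape a b c d) : b ∈ Set.uIcc a d := by
  grind [IsZShape, Set.mem_uIcc]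

theorem mem_uIcc_outer_right (h : IsZShape a b c d) : c ∈ Set.uIcc a d := by
  grind [IsZShape, Set.mem_uIcc]

theorem extend (h : IsZShape a b c d) (hd : d ∈ Set.uIcc c e) : IsZShape a b c e := by
  grind [IsZShape, Set.mem_uIcc]

theorem uIcc_subset (h : IsZShape a b c d) : Set.uIcc b c ⊆ Set.uIcc a d :=
  Set.uIcc_subset_uIcc h.mem_uIcc_outer_left h.mem_uIcc_outer_right

theorem uIcc_subset_of_extend_right (h : IsZShape a b c f) (hn : ¬ IsZShape a b c p)
    (hz : IsZShape c p q e) (he : e ∈ Set.uIcc q f) : Set.uIcc p q ⊆ Set.uIcc b c := by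
  apply Set.uIcc_subset_uIcc <;> grind [IsZShape, Set.mem_uIcc]

theorem uIcc_subset_of_extend_left (h : IsZShape a p q e) (hn : ¬ IsZShape c p q e)
    (hz : IsZShape a b c d) (hd : d ∈ Set.uIcc c p) : Set.uIcc b c ⊆ Set.uIcc p q := by
  apply Set.uIcc_subset_uIcc <;> grind [IsZShape, Set.mem_uIcc]

end IsZShape

namespace IsZigzag

theorem tail (h : IsZigzag (a :: b :: l)) : IsZigzag (b :: l) := by
  cases h with
  | pair => exact singleton b
  | cons _ h => exact h

theorem ne (h : IsZigzag (a :: b :: l)) : a ≠ b := by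
  cases h with
  | pair h => exact h
  | cons h _ => exact h.ne_left

theorem isTurn (h : IsZigzag (a :: b :: c :: l)) : IsTurn a b c := by
  cases h with
  | cons h _ => exact h

theorem extend_head (h : IsZigzag (b :: c :: l)) (hb : b ∈ Set.uIcc a c) :
    IsZigzag (a :: c :: l) := by
  cases h with
  | pair h => exact pair (by grind [Set.mem_uIcc])
  | cons h hl => exact cons (by grind [IsTurn, Set.mem_uIcc]) hl

-- Without z-motions the path, once folded back into its first run, spirals inwards.
theorem getLast?_mem_uIcc_of_forall_not_hasZShape {z : α} (hz : IsZigzag (a :: b :: c :: l))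
    (hn : ∀ p q, ¬ HasZShape (a :: b :: c :: l) p q) (hc : c ∈ Set.uIcc a b)
    (hlast : (c :: l).getLast? = some z) : z ∈ Set.uIcc b c ∧ z ≠ b := by
  induction l generalizing a b c with
  | nil =>
    obtain rfl : c = z := by simpa using hlast
    exact ⟨Set.right_mem_uIcc, hz.tail.ne.symm⟩
  | cons d l ih =>
    have hturn : IsTurn b c d := hz.tail.isTurn
    have hnz : ¬ IsZShape a b c d := fun h => hn _ _ (.head h)
    have hd : d ∈ Set.uIcc b c ∧ d ≠ b := by grind [IsTurn, IsZShape, Set.mem_uIcc]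
    have := ih hz.tail (fun p q h => hn p q h.tail) hd.1
      (by simpa only [List.getLast?_cons_cons] using hlast)
    grind [IsTurn, Set.mem_uIcc]

theorem eq_nil_or_eq_singleton_of_forall_not_hasZShape {z : α} (hz : IsZigzag (a :: l))
    (hl : ∀ x ∈ l, x ∈ Set.Icc a z) (hlast : (a :: l).getLast? = some z)
    (hn : ∀ p q, ¬ HasZShape (a :: l) p q) : (l = [] ∧ a = z) ∨ l = [z] := by
  rcases l with _ | ⟨b, _ | ⟨c, l⟩⟩
  · simpa using hlast
  · simpa using hlast
  · exfalso
    have hb : b ∈ Set.Icc a z := hl b (by simp)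
    have hc : c ∈ Set.Icc a z := hl c (by simp)
    have hturn : IsTurn a b c := hz.isTurn
    have hback : c ∈ Set.uIcc a b := by grind [IsTurn, Set.mem_uIcc]
    have := hz.getLast?_mem_uIcc_of_forall_not_hasZShape hn hback
      (by simpa only [List.getLast?_cons_cons] using hlast)
    grind [IsTurn, Set.mem_uIcc]

end IsZigzag

namespace Sweep

theorem exists_sweep (a : α) (B : Set α) (l : List α) : ∃ o X, Sweep a B l o X := by
  induction hn : l.length using Nat.strong_induction_on generalizing a B l with | _ n ih =>
  subst hn
  rcases l with _ | ⟨b, l⟩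
  · exact ⟨_, _, nil⟩
  by_cases h : ∃ c d l', l = c :: d :: l' ∧ IsZShape a b c d ∧ c ∉ B
  · obtain ⟨c, d, l', rfl, hz, hc⟩ := h
    obtain ⟨o, X, hs⟩ := ih _ (by simp) c (Set.uIcc b c) (d :: l') rfl
    exact ⟨_, _, remove hz hc hs⟩
  · obtain ⟨o, X, hs⟩ := ih _ (by simp) b (B ∩ {b}) l rfl
    push Not at h
    exact ⟨_, _, keep h hs⟩

theorem exists_eq_cons (h : Sweep a B (b :: l) o X) :
    ∃ b' o', o = b' :: o' ∧ b ∈ Set.uIcc a b' := by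
  generalize hv : b :: l = v at h
  induction h generalizing b l with
  | nil => cases hv
  | keep =>
    cases hv
    exact ⟨_, _, rfl, Set.right_mem_uIcc⟩
  | remove hz _ _ ih =>
    cases hv
    obtain ⟨d', o', rfl, hd⟩ := ih rfl
    exact ⟨d', o', rfl, (hz.extend hd).mem_uIcc_outer_left⟩

theorem eq_nil (h : Sweep a B [] o X) : o = [] := by
  cases h
  rfl

theorem sublist (h : Sweep a B l o X) : o.Sublist l := by
  induction h with
  | nil => exact .slnil
  | keep _ _ ih => exact ih.cons_cons _
  | remove _ _ _ ih => exact (ih.cons _).cons _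

theorem getLast?_eq (h : Sweep a B l o X) : (a :: o).getLast? = (a :: l).getLast? := by
  induction h with
  | nil => rfl
  | keep _ _ ih => simpa only [List.getLast?_cons_cons] using ih
  | remove _ _ hs ih =>
    obtain ⟨d', o', rfl, -⟩ := hs.exists_eq_cons
    simpa only [List.getLast?_cons_cons] using ih

theorem isZigzag (h : Sweep a B l o X) (hl : IsZigzag (a :: l)) : IsZigzag (a :: o) := by
  induction h with
  | nil => exact hl
  | @keep a b B l o X _ hs ih =>
    rcases l with _ | ⟨c, l⟩
    · rwa [hs.eq_nil]
    · obtain ⟨c', o', rfl, hc⟩ := hs.exists_eq_cons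
      exact .cons (hl.isTurn.extend hc) (ih hl.tail)
  | remove hz _ hs ih =>
    obtain ⟨d', o', rfl, hd⟩ := hs.exists_eq_cons
    exact (ih hl.tail.tail).extend_head (hz.extend hd).mem_uIcc_outer_right

theorem hasZShape_of_mem (h : Sweep a B l o X) : ∀ u ∈ X, HasZShape (a :: l) u.1 u.2 := by
  induction h with
  | nil => simp
  | keep _ _ ih => exact fun u hu => (ih u hu).tail
  | remove hz _ _ ih =>
    rintro u (_ | ⟨_, hu⟩)
    · exact .head hz
    · exact (ih u hu).tail.tail

theorem uIcc_subset_or_blocked_of_keep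
    (hB : ∀ c d l', l = c :: d :: l' → IsZShape a b c d → c ∈ B)
    (hs : Sweep b (B ∩ {b}) l (q :: e :: o) X) (hz : IsZShape a b q e) :
    (∃ u ∈ X, Set.uIcc u.1 u.2 ⊆ Set.uIcc b q) ∨ (HasZShape (a :: b :: l) b q ∧ q ∈ B) := by
  cases hs with
  | remove hz' _ hs' =>
    obtain ⟨e', o', heq, he⟩ := hs'.exists_eq_cons
    cases heq
    exact .inl ⟨_, List.mem_cons_self, (hz'.extend he).uIcc_subset⟩
  | keep hB' hs' =>
    cases hs' with
    | keep => exact .inr ⟨.head hz, hB _ _ _ rfl hz⟩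
    | @remove _ d _ _ _ _ _ _ hz' _ hs'' =>
      by_cases hd : IsZShape a b q d
      · exact .inr ⟨.head hd, hB _ _ _ rfl hd⟩
      · obtain ⟨f, o', heq, hf⟩ := hs''.exists_eq_cons
        cases heq
        exact .inl ⟨_, List.mem_cons_self, hz.uIcc_subset_of_extend_right hd hz' hf⟩

theorem hasZShape_cases (h : Sweep a B l o X) (hpq : HasZShape (a :: o) p q) :
    (∃ u ∈ X, Set.uIcc u.1 u.2 ⊆ Set.uIcc p q) ∨
      (HasZShape (a :: l) p q ∧ (q ∈ B ∨ ∃ u ∈ X, q ∈ Set.uIcc u.1 u.2)) := by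
  induction h with
  | nil => nomatch hpq
  | keep hB hs ih =>
    cases hpq with
    | tail hpq =>
      rcases ih hpq with h | ⟨hl, hq⟩
      · exact .inl h
      · exact .inr ⟨hl.tail, hq.imp_left And.left⟩
    | head hz =>
      exact (uIcc_subset_or_blocked_of_keep hB hs hz).imp_right fun h => ⟨h.1, .inl h.2⟩
  | @remove a b c d B l o X hz _ hs ih =>
    suffices hc : HasZShape (c :: o) p q ∨ Set.uIcc b c ⊆ Set.uIcc p q by
      rcases hc with hc | hsub
      · rcases ih hc with ⟨u, hu, hsub⟩ | ⟨hl, hq⟩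
        · exact .inl ⟨u, List.mem_cons_of_mem _ hu, hsub⟩
        · exact .inr ⟨hl.tail.tail, .inr (by simpa using hq)⟩
      · exact .inl ⟨_, List.mem_cons_self, hsub⟩
    cases hpq with
    | tail hpq => exact .inl hpq.tail
    | @head _ _ _ e _ hz' =>
      by_cases hn : IsZShape c p q e
      · exact .inl (.head hn)
      · obtain ⟨d', o', heq, hd⟩ := hs.exists_eq_cons
        cases heq
        exact .inr (hz'.uIcc_subset_of_extend_left hn hz hd)

end Sweep

end Zigzag

section Path

variable {a b c d x : ℕ} {l : List ℕ}

/-- The monotone run of naturals from `a` towards `b`, including `a` and excluding `b`; at most one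
of the two intervals is nonempty. -/
def monoRun (a b : ℕ) : List ℕ := List.Ico a b ++ (List.Ico (b + 1) (a + 1)).reverse

/-- The one-step sequence that visits the given turning points in order, joining successive ones by
monotone runs. -/
def zigzagPath : List ℕ → List ℕ
  | [] => []
  | [a] => [a]
  | a :: b :: l => monoRun a b ++ zigzagPath (b :: l)

theorem length_monoRun (a b : ℕ) : (monoRun a b).length = Nat.dist a b := by
  simp [monoRun, Nat.dist]
  omega

theorem mem_monoRun : x ∈ monoRun a b ↔ x ∈ Set.uIcc a b ∧ x ≠ b := by
  simp only [monoRun, List.mem_append, List.mem_reverse, List.Ico.mem, Set.mem_uIcc]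
  omega

theorem monoRun_self (a : ℕ) : monoRun a a = [] := by
  simp [monoRun]

theorem monoRun_append_monoRun (h : b ∈ Set.uIcc a c) :
    monoRun a b ++ monoRun b c = monoRun a c := by
  rcases Set.mem_uIcc.mp h with ⟨hab, hbc⟩ | ⟨hcb, hba⟩
  · simp [monoRun, List.Ico.eq_nil_of_le, hab, hbc, hab.trans hbc, List.Ico.append_consecutive]
  · simp [monoRun, List.Ico.eq_nil_of_le, hcb, hba, hcb.trans hba, ← List.reverse_append,
      List.Ico.append_consecutive]

theorem exists_monoRun_eq_cons (h : a ≠ b) : ∃ t, monoRun a b = a :: t := by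
  rcases h.lt_or_gt with h | h
  · exact ⟨List.Ico (a + 1) b, by simp [monoRun, List.Ico.eq_cons h, h.le]⟩
  · exact ⟨(List.Ico (b + 1) a).reverse, by
      simp [monoRun, List.Ico.eq_nil_of_le h.le, List.Ico.succ_top (Nat.succ_le_of_lt h)]⟩

theorem monoRun_eq_singleton (h : b = a + 1 ∨ a = b + 1) : monoRun a b = [a] := by
  rcases h with rfl | rfl <;> simp [monoRun, List.Ico.eq_nil_of_le]

theorem zigzagPath_cons_cons (a b : ℕ) (l : List ℕ) :
    zigzagPath (a :: b :: l) = monoRun a b ++ zigzagPath (b :: l) := rfl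

theorem zigzagPath_insert (h : b ∈ Set.uIcc a c) (l : List ℕ) :
    zigzagPath (a :: b :: c :: l) = zigzagPath (a :: c :: l) := by
  simp only [zigzagPath_cons_cons, ← List.append_assoc, monoRun_append_monoRun h]

theorem exists_zigzagPath_eq_cons (a : ℕ) (l : List ℕ) : ∃ t, zigzagPath (a :: l) = a :: t := by
  induction l generalizing a with
  | nil => exact ⟨[], rfl⟩
  | cons b l ih =>
    by_cases hab : a = b
    · subst hab
      simpa only [zigzagPath_cons_cons, monoRun_self, List.nil_append] using ih a
    · obtain ⟨t, ht⟩ := exists_monoRun_eq_cons hab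
      exact ⟨t ++ zigzagPath (b :: l), by rw [zigzagPath_cons_cons, ht, List.cons_append]⟩

theorem zigzagPath_subset_zigzagPath_cons (a : ℕ) (l : List ℕ) :
    zigzagPath l ⊆ zigzagPath (a :: l) := by
  cases l with
  | nil => exact List.nil_subset _
  | cons b l => exact List.subset_append_right _ _

theorem subset_zigzagPath (l : List ℕ) : l ⊆ zigzagPath l := by
  induction l with
  | nil => exact List.nil_subset _
  | cons a l ih =>
    refine List.cons_subset.mpr ⟨?_, List.Subset.trans ih (zigzagPath_subset_zigzagPath_cons a l)⟩
    obtain ⟨t, ht⟩ := exists_zigzagPath_eq_cons a l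
    simp [ht]

theorem getLast?_zigzagPath (l : List ℕ) : (zigzagPath l).getLast? = l.getLast? := by
  induction l with
  | nil => rfl
  | cons a l ih =>
    cases l with
    | nil => rfl
    | cons b l =>
      rw [zigzagPath_cons_cons, List.getLast?_append, ih, List.getLast?_cons_cons]
      simp [List.getLast?_cons]

theorem HasZShape.uIcc_subset_zigzagPath {v : List ℕ} {p q : ℕ} (h : HasZShape v p q)
    (hx : x ∈ Set.uIcc p q) : x ∈ zigzagPath v := by
  induction h with
  | @head a p q d l _ =>
    apply zigzagPath_subset_zigzagPath_cons a
    by_cases hxq : x = q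
    · exact hxq ▸ subset_zigzagPath _ (by simp)
    · exact List.mem_append_left _ (mem_monoRun.mpr ⟨hx, hxq⟩)
  | tail _ ih => exact zigzagPath_subset_zigzagPath_cons _ _ (ih hx)

theorem IsZShape.count_zigzagPath (h : IsZShape a b c d) (x : ℕ) (l : List ℕ) :
    (zigzagPath (a :: b :: c :: d :: l)).count x =
      (zigzagPath (a :: d :: l)).count x + ((monoRun b c).count x + (monoRun c b).count x) := by
  rw [← zigzagPath_insert h.mem_uIcc_outer_left, zigzagPath_cons_cons a b (c :: d :: l),
    zigzagPath_cons_cons b c, ← zigzagPath_insert h.mem_uIcc_right, zigzagPath_cons_cons a b,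
    zigzagPath_cons_cons c b]
  simp only [List.count_append]
  omega

theorem count_monoRun_add_count_monoRun_pos (hbc : b ≠ c) (hx : x ∈ Set.uIcc b c) :
    0 < (monoRun b c).count x + (monoRun c b).count x := by
  rw [← List.count_append, List.count_pos_iff, List.mem_append, mem_monoRun, mem_monoRun,
    Set.uIcc_comm c b]
  grind

namespace Sweep

variable {B : Set ℕ} {o : List ℕ} {X : List (ℕ × ℕ)}

theorem count_zigzagPath_le (h : Sweep a B l o X) (x : ℕ) :
    (zigzagPath (a :: o)).count x ≤ (zigzagPath (a :: l)).count x := by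
  induction h with
  | nil => rfl
  | keep _ _ ih =>
    simp only [zigzagPath_cons_cons, List.count_append]
    exact Nat.add_le_add_left ih _
  | @remove a b c d _ l _ _ hz _ hs ih =>
    obtain ⟨d', o', rfl, hd⟩ := hs.exists_eq_cons
    calc (zigzagPath (a :: d' :: o')).count x
        ≤ (zigzagPath (a :: b :: c :: d' :: o')).count x :=
          ((hz.extend hd).count_zigzagPath x o').symm ▸ Nat.le_add_right _ _
      _ ≤ (zigzagPath (a :: b :: c :: d :: l)).count x := by
          simp only [zigzagPath_cons_cons, List.count_append] at ih ⊢
          omega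

theorem count_zigzagPath_lt (h : Sweep a B l o X) {u : ℕ × ℕ} (hu : u ∈ X)
    (hx : x ∈ Set.uIcc u.1 u.2) :
    (zigzagPath (a :: o)).count x < (zigzagPath (a :: l)).count x := by
  induction h with
  | nil => cases hu
  | keep _ _ ih =>
    simp only [zigzagPath_cons_cons, List.count_append]
    exact Nat.add_lt_add_left (ih hu) _
  | @remove a b c _ _ _ _ _ hz _ hs ih =>
    have hle := hs.count_zigzagPath_le x
    obtain ⟨d', o', rfl, hd⟩ := hs.exists_eq_cons
    have hcount := (hz.extend hd).count_zigzagPath x o'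
    simp only [zigzagPath_cons_cons, List.count_append] at hle ih hcount ⊢
    rcases List.mem_cons.mp hu with rfl | hu
    · have hne : b ≠ c := hz.isTurn_right.ne_left
      have := count_monoRun_add_count_monoRun_pos hne hx
      omega
    · have := ih hu
      omega

end Sweep

theorem exists_isZigzag_zigzagPath_eq {s : List ℕ}
    (hs : List.IsChain (fun x y => y = x + 1 ∨ x = y + 1) (a :: s)) :
    ∃ l, IsZigzag (a :: l) ∧ zigzagPath (a :: l) = a :: s := by
  induction s generalizing a with
  | nil => exact ⟨[], .singleton a, rfl⟩
  | cons y s ih =>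
    obtain ⟨hay, hs⟩ := List.isChain_cons_cons.mp hs
    obtain ⟨l, hl, hpath⟩ := ih hs
    have hcons : zigzagPath (a :: y :: l) = a :: y :: s := by
      rw [zigzagPath_cons_cons, hpath, monoRun_eq_singleton hay, List.singleton_append]
    rcases l with _ | ⟨b, l⟩
    · exact ⟨[y], .pair (by omega), hcons⟩
    · by_cases hturn : IsTurn a y b
      · exact ⟨y :: b :: l, .cons hturn hl, hcons⟩
      · have hy : y ∈ Set.uIcc a b := by
          have := hl.ne
          grind [IsTurn, Set.mem_uIcc]
        exact ⟨b :: l, hl.extend_head hy, zigzagPath_insert hy l ▸ hcons⟩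

end Path

section ZMotion

variable {A : ℕ → ℕ} {n k a b c d x : ℕ} (u : List ℕ)

/-- After its first `k` entries, the sequence `A₁, …, Aₙ` runs monotonically from `a` to `b`. -/
structure RunsAt (A : ℕ → ℕ) (n k a b : ℕ) : Prop where
  lt : k + Nat.dist a b < n
  apply_eq : ∀ x ∈ Set.uIcc a b, A (k + 1 + Nat.dist a x) = x

/-- The z-motion through the turning points `a, b, c, d`, where `k` entries of the sequence precede
the visit to `a`: it begins on the run leaving `a`, at the value `c`, and ends on the run leaving
`c`, at the value `b`. -/
def zMotionAt (k a b c : ℕ) : ℕ × ℕ × ℕ × ℕ :=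
  (k + 1 + Nat.dist a c, k + 1 + Nat.dist a b, k + 1 + Nat.dist a b + Nat.dist b c,
    k + 1 + Nat.dist a b + 2 * Nat.dist b c)

namespace RunsAt

theorem not_isReversal (h : RunsAt A n k a b) {i : ℕ} (hi : k + 1 < i)
    (hi' : i < k + 1 + Nat.dist a b) : ¬ IsReversal A n i := by
  rintro ⟨-, -, heq⟩
  have exists_dist_eq {j : ℕ} (hj : j ≤ Nat.dist a b) : ∃ x ∈ Set.uIcc a b, Nat.dist a x = j := by
    rcases le_total a b with hab | hba
    · exact ⟨a + j, by simp only [Set.mem_uIcc, Nat.dist] at *; omega⟩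
    · exact ⟨a - j, by simp only [Set.mem_uIcc, Nat.dist] at *; omega⟩
  obtain ⟨x, hx, hxi⟩ := exists_dist_eq (j := i - k) (by omega)
  obtain ⟨y, hy, hyi⟩ := exists_dist_eq (j := i - k - 2) (by omega)
  rw [show i + 1 = k + 1 + Nat.dist a x by omega, show i - 1 = k + 1 + Nat.dist a y by omega,
    h.apply_eq x hx, h.apply_eq y hy] at heq
  subst heq
  omega

theorem isReversal (hab : RunsAt A n k a b) (hbc : RunsAt A n (k + Nat.dist a b) b c)
    (hturn : IsTurn a b c) : IsReversal A n (k + 1 + Nat.dist a b) := by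
  obtain ⟨x, hxa, hxc, hbx, hax⟩ : ∃ x, x ∈ Set.uIcc a b ∧ x ∈ Set.uIcc b c ∧
      Nat.dist b x = 1 ∧ Nat.dist a b = Nat.dist a x + 1 := by
    simp only [Set.mem_uIcc, Nat.dist]
    rcases hturn with h | h
    · exact ⟨b - 1, by omega⟩
    · exact ⟨b + 1, by omega⟩
  have hbc_pos : 0 < Nat.dist b c := by
    simp only [Set.mem_uIcc, Nat.dist] at *
    omega
  have hlt := hbc.lt
  refine ⟨by omega, by omega, ?_⟩
  calc A (k + 1 + Nat.dist a b + 1)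
      = A (k + Nat.dist a b + 1 + Nat.dist b x) := by congr 1; omega
    _ = x := hbc.apply_eq x hxc
    _ = A (k + 1 + Nat.dist a x) := (hab.apply_eq x hxa).symm
    _ = A (k + 1 + Nat.dist a b - 1) := by congr 1; omega

theorem zInstance (hab : RunsAt A n k a b) (hbc : RunsAt A n (k + Nat.dist a b) b c)
    (hcd : RunsAt A n (k + Nat.dist a b + Nat.dist b c) c d) (h : IsZShape a b c d) :
    ZInstance A n (k + 1 + Nat.dist a c) (k + 1 + Nat.dist a b)
      (k + 1 + Nat.dist a b + Nat.dist b c) (k + 1 + Nat.dist a b + 2 * Nat.dist b c) := by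
  have hdist : Nat.dist a b = Nat.dist a c + Nat.dist b c ∧ 0 < Nat.dist b c ∧
      Nat.dist b c ≤ Nat.dist c d ∧ Nat.dist c b = Nat.dist b c := by
    unfold IsZShape at h
    unfold Nat.dist
    omega
  have hlt := hcd.lt
  have hA_start := hab.apply_eq c h.mem_uIcc_left
  have hA_left := hab.apply_eq b Set.right_mem_uIcc
  have hA_right := hbc.apply_eq c Set.right_mem_uIcc
  have hA_end := hcd.apply_eq b h.mem_uIcc_right
  have hpos_left : k + Nat.dist a b + 1 = k + 1 + Nat.dist a b := by omega
  have hpos_right : k + Nat.dist a b + Nat.dist b c + 1 = k + 1 + Nat.dist a b + Nat.dist b c := by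
    omega
  have hrev_right := hbc.isReversal hcd h.isTurn_right
  rw [hpos_left] at hA_right hrev_right
  rw [hpos_right, hdist.2.2.2, add_assoc _ (Nat.dist b c), ← two_mul] at hA_end
  refine ⟨⟨hab.isReversal hbc h.isTurn_left, hrev_right, by omega,
    fun i hi hi' => hbc.not_isReversal (by omega) (by omega)⟩,
    by omega, by omega, by omega, by omega, hA_start.trans hA_right.symm,
    hA_end.trans hA_left.symm, fun i hi hi' => hab.not_isReversal (by omega) (by omega),
    fun i hi hi' => hcd.not_isReversal (by omega) (by omega)⟩

end RunsAt

theorem append_zigzagPath_cons_cons (a b : ℕ) (l : List ℕ) :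
    u ++ zigzagPath (a :: b :: l) = (u ++ monoRun a b) ++ zigzagPath (b :: l) := by
  rw [zigzagPath_cons_cons, List.append_assoc]

theorem append_zigzagPath_split (hx : x ∈ Set.uIcc a b) (l : List ℕ) :
    u ++ zigzagPath (a :: b :: l) = (u ++ monoRun a x) ++ zigzagPath (x :: b :: l) := by
  rw [← zigzagPath_insert hx, append_zigzagPath_cons_cons]

theorem runsAt_append_zigzagPath (a b : ℕ) (l : List ℕ) :
    RunsAt (seqAt (u ++ zigzagPath (a :: b :: l))) (u ++ zigzagPath (a :: b :: l)).length
      u.length a b where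
  lt := by
    obtain ⟨t, ht⟩ := exists_zigzagPath_eq_cons b l
    rw [append_zigzagPath_cons_cons, ht]
    simp only [List.length_append, List.length_cons, length_monoRun]
    omega
  apply_eq x hx := by
    obtain ⟨t, ht⟩ := exists_zigzagPath_eq_cons x (b :: l)
    have hpos : u.length + 1 + Nat.dist a x - 1 = (u ++ monoRun a x).length := by
      rw [List.length_append, length_monoRun]
      omega
    rw [append_zigzagPath_split u hx, ht, seqAt, hpos]
    simp [List.getD_eq_getElem?_getD]

namespace IsZShape

theorem quadZ_zMotionAt (h : IsZShape a b c d) (l : List ℕ) :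
    QuadZ (u ++ zigzagPath (a :: b :: c :: d :: l)) (zMotionAt u.length a b c) := by
  have hab := runsAt_append_zigzagPath u a b (c :: d :: l)
  have hbc := runsAt_append_zigzagPath (u ++ monoRun a b) b c (d :: l)
  have hcd := runsAt_append_zigzagPath (u ++ monoRun a b ++ monoRun b c) c d l
  simp only [← append_zigzagPath_cons_cons] at hbc hcd
  rw [List.length_append (as := u) (bs := monoRun a b), length_monoRun] at hbc
  rw [List.length_append (bs := monoRun b c), List.length_append (as := u) (bs := monoRun a b),
    length_monoRun, length_monoRun] at hcd
  exact hab.zInstance hbc hcd h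

theorem removeSpan_zMotionAt (h : IsZShape a b c d) (l : List ℕ) :
    removeSpan (u ++ zigzagPath (a :: b :: c :: d :: l)) (zMotionAt u.length a b c).2.1
      (zMotionAt u.length a b c).2.2.2 = u ++ zigzagPath (a :: d :: l) := by
  obtain ⟨t, ht⟩ := exists_zigzagPath_eq_cons b (d :: l)
  obtain ⟨t', ht'⟩ := exists_zigzagPath_eq_cons b (c :: d :: l)
  have htake : (u ++ zigzagPath (a :: b :: c :: d :: l)).take (u.length + 1 + Nat.dist a b) =
      u ++ monoRun a b ++ [b] := by
    rw [append_zigzagPath_cons_cons, ht', List.append_cons]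
    apply List.take_left'
    simp only [List.length_append, List.length_singleton, length_monoRun]
    omega
  have hdrop : (u ++ zigzagPath (a :: b :: c :: d :: l)).drop
      (u.length + 1 + Nat.dist a b + 2 * Nat.dist b c) = t := by
    rw [append_zigzagPath_cons_cons, append_zigzagPath_cons_cons,
      append_zigzagPath_split _ h.mem_uIcc_right, ht, List.append_cons]
    apply List.drop_left'
    simp only [List.length_append, List.length_singleton, length_monoRun, Nat.dist_comm c b]
    omega
  rw [removeSpan, zMotionAt, htake, hdrop, append_zigzagPath_split u h.mem_uIcc_outer_left, ht]
  simp only [List.append_assoc, List.singleton_append]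

end IsZShape

end ZMotion

section Squeeze

variable {a b c z : ℕ} {l : List ℕ}

namespace Sweep

variable {B : Set ℕ} {o : List ℕ} {X : List (ℕ × ℕ)}

/-- `L` lists, from right to left, disjoint z-motions of `u ++ zigzagPath (a :: l)` that begin after
the initial segment `u` and after the values in `B` on the run leaving `a`, and whose removal leaves
`u ++ zigzagPath (a :: o)`. -/
structure Realizes (u : List ℕ) (a : ℕ) (B : Set ℕ) (l o : List ℕ)
    (L : List (ℕ × ℕ × ℕ × ℕ)) : Prop where
  quadZ : ∀ q ∈ L, QuadZ (u ++ zigzagPath (a :: l)) q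
  length_lt : ∀ q ∈ L, u.length < q.1
  blocked_lt : ∀ q ∈ L, ∀ z ∈ B, u.length + 1 + Nat.dist a z < q.1
  pairwise : L.Pairwise fun q q' => q'.2.2.2 < q.1
  foldl_eq : L.foldl (fun t q => removeSpan t q.2.1 q.2.2.2) (u ++ zigzagPath (a :: l)) =
    u ++ zigzagPath (a :: o)

namespace Realizes

variable {u : List ℕ} {d : ℕ} {L : List (ℕ × ℕ × ℕ × ℕ)}

theorem keep (h : Realizes (u ++ monoRun a b) b (B ∩ {b}) l o L) (hB : B ⊆ Set.uIcc a b) :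
    Realizes u a B (b :: l) (b :: o) L where
  quadZ := by simpa only [append_zigzagPath_cons_cons] using h.quadZ
  length_lt q hq := by
    have := h.length_lt q hq
    rw [List.length_append] at this
    omega
  blocked_lt q hq z hz := by
    have hlt := h.length_lt q hq
    rw [List.length_append, length_monoRun] at hlt
    by_cases hzb : z = b
    · subst hzb
      have := h.blocked_lt q hq z ⟨hz, rfl⟩
      rw [List.length_append, length_monoRun] at this
      omega
    · have : Nat.dist a z < Nat.dist a b := by
        have := hB hz
        simp only [Set.mem_uIcc, Nat.dist] at *
        omega
      omega
  pairwise := h.pairwise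
  foldl_eq := by simpa only [append_zigzagPath_cons_cons] using h.foldl_eq

theorem remove {d' : ℕ} {o' : List ℕ}
    (h : Realizes (u ++ monoRun a b ++ monoRun b c) c (Set.uIcc b c) (d :: l) (d' :: o') L)
    (hz : IsZShape a b c d) (hz' : IsZShape a b c d') (hB : B ⊆ Set.uIcc a b)
    (hc : ∀ z ∈ B, c ∉ Set.uIcc a z) :
    Realizes u a B (b :: c :: d :: l) (d' :: o') (L ++ [zMotionAt u.length a b c]) := by
  have hbegin : ∀ q ∈ L, (zMotionAt u.length a b c).2.2.2 < q.1 := fun q hq => by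
    have := h.blocked_lt q hq b Set.left_mem_uIcc
    simp only [List.length_append, length_monoRun, Nat.dist_comm c b] at this
    simp only [zMotionAt]
    omega
  have hdist : ∀ z ∈ B, Nat.dist a z < Nat.dist a c := fun z hzB => by
    have := hB hzB
    have := hc z hzB
    have := hz.mem_uIcc_left
    simp only [Set.mem_uIcc, Nat.dist] at *
    omega
  have hac : Nat.dist a c ≤ Nat.dist a b := by
    have := hz.mem_uIcc_left
    simp only [Set.mem_uIcc, Nat.dist] at *
    omega
  have hlate : ∀ q ∈ L ++ [zMotionAt u.length a b c], u.length + 1 + Nat.dist a c ≤ q.1 := by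
    intro q hq
    rcases List.mem_append.mp hq with hq | hq
    · have := hbegin q hq
      simp only [zMotionAt] at this
      omega
    · rw [List.mem_singleton.mp hq, zMotionAt]
  refine ⟨?_, fun q hq => ?_, fun q hq z hzB => ?_, ?_, ?_⟩
  · have := h.quadZ
    simp only [← append_zigzagPath_cons_cons] at this
    simpa [or_imp, forall_and, hz.quadZ_zMotionAt] using this
  · have := hlate q hq
    omega
  · have := hlate q hq
    have := hdist z hzB
    omega
  · exact List.pairwise_append.mpr ⟨h.pairwise, List.pairwise_singleton _ _, by simpa using hbegin⟩
  · have := h.foldl_eq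
    simp only [← append_zigzagPath_cons_cons] at this
    rw [List.foldl_append, this, List.foldl_cons, List.foldl_nil, hz'.removeSpan_zMotionAt]

end Realizes

theorem exists_realizes (h : Sweep a B l o X) (u : List ℕ) (hB : ∀ z ∈ B, Set.uIcc a z ⊆ B)
    (hl : ∀ b ∈ l.head?, B ⊆ Set.uIcc a b) : ∃ L, Realizes u a B l o L := by
  induction h generalizing u with
  | nil => exact ⟨[], by simp, by simp, by simp, .nil, rfl⟩
  | @keep a b B l o X _ _ ih =>
    obtain ⟨L, hL⟩ := ih (u ++ monoRun a b)
      (by rintro z ⟨hz, rfl⟩; simpa using hz)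
      (by rintro c - z ⟨-, rfl⟩; exact Set.left_mem_uIcc)
    exact ⟨L, hL.keep (hl b rfl)⟩
  | @remove a b c d B l o X hz hc hs ih =>
    obtain ⟨L, hL⟩ := ih (u ++ monoRun a b ++ monoRun b c)
      (fun z hz => Set.uIcc_subset_uIcc Set.right_mem_uIcc hz)
      (by
        rintro _ ⟨⟩
        exact Set.uIcc_subset_uIcc hz.mem_uIcc_right Set.left_mem_uIcc)
    obtain ⟨d', o', rfl, hd⟩ := hs.exists_eq_cons
    exact ⟨_, hL.remove hz (hz.extend hd) (hl b rfl) fun z hzB hcz => hc (hB z hzB hcz)⟩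

theorem squeezeStep (h : Sweep a ∅ l o X) :
    SqueezeStep (zigzagPath (a :: l)) (zigzagPath (a :: o)) := by
  obtain ⟨L, hL⟩ := h.exists_realizes [] (by simp) (by simp)
  exact ⟨L, hL.quadZ, hL.pairwise, hL.foldl_eq.symm⟩

end Sweep

/-- The state after `t` squeeze steps: a zigzag within `[a, z]` that starts at `a`, ends at `z` and
crosses each value at most `N` times, and in which every remaining z-motion has some value `x` on
its middle run `p, q` for which the potential `N * count x + count q` has dropped by `t` below its
maximal value. -/
structure SqueezeInvariant (N a z t : ℕ) (l : List ℕ) : Prop where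
  isZigzag : IsZigzag (a :: l)
  mem_Icc : ∀ x ∈ l, x ∈ Set.Icc a z
  getLast?_eq : (a :: l).getLast? = some z
  count_le : ∀ x, (zigzagPath (a :: l)).count x ≤ N
  potential_le : ∀ p q, HasZShape (a :: l) p q → ∃ x ∈ Set.uIcc p q,
    t + N * (zigzagPath (a :: l)).count x + (zigzagPath (a :: l)).count q ≤ N ^ 2 + N

namespace SqueezeInvariant

variable {N t : ℕ}

theorem potential_le_of_sweep {o : List ℕ} {X : List (ℕ × ℕ)} {p q : ℕ}
    (h : SqueezeInvariant N a z t l) (hs : Sweep a ∅ l o X) (hpq : HasZShape (a :: o) p q) :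
    ∃ x ∈ Set.uIcc p q,
      t + 1 + N * (zigzagPath (a :: o)).count x + (zigzagPath (a :: o)).count q ≤ N ^ 2 + N := by
  rcases hs.hasZShape_cases hpq with ⟨⟨p', q'⟩, hu, hsub⟩ | ⟨hold, hq | ⟨u, hu, hqu⟩⟩
  · have hold := hs.hasZShape_of_mem _ hu
    obtain ⟨x, hx, hpot⟩ := h.potential_le p' q' hold
    have hdrop := hs.count_zigzagPath_lt hu hx
    have hq : (zigzagPath (a :: o)).count q ≤ N := (hs.count_zigzagPath_le q).trans (h.count_le q)
    have hq' : 0 < (zigzagPath (a :: l)).count q' :=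
      List.count_pos_iff.mpr (hold.uIcc_subset_zigzagPath Set.right_mem_uIcc)
    have hmul := Nat.mul_le_mul_left N (Nat.succ_le_of_lt hdrop)
    rw [Nat.mul_succ] at hmul
    exact ⟨x, hsub hx, by omega⟩
  · exact hq.elim
  · obtain ⟨x, hx, hpot⟩ := h.potential_le p q hold
    have hdrop := hs.count_zigzagPath_lt hu hqu
    have hmul := Nat.mul_le_mul_left N (hs.count_zigzagPath_le x)
    exact ⟨x, hx, by omega⟩

theorem exists_squeezeStep (h : SqueezeInvariant N a z t l) :
    ∃ o, SqueezeStep (zigzagPath (a :: l)) (zigzagPath (a :: o)) ∧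
      SqueezeInvariant N a z (t + 1) o := by
  obtain ⟨o, X, hs⟩ := Sweep.exists_sweep a ∅ l
  exact ⟨o, hs.squeezeStep, hs.isZigzag h.isZigzag, fun x hx => h.mem_Icc x (hs.sublist.subset hx),
    hs.getLast?_eq.trans h.getLast?_eq, fun x => (hs.count_zigzagPath_le x).trans (h.count_le x),
    fun _ _ hpq => h.potential_le_of_sweep hs hpq⟩

theorem exists_squeezeIter (h : SqueezeInvariant N a z t l) (k : ℕ) :
    ∃ o, SqueezeIter k (zigzagPath (a :: l)) (zigzagPath (a :: o)) ∧
      SqueezeInvariant N a z (t + k) o := by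
  induction k generalizing t l with
  | zero => exact ⟨l, rfl, h⟩
  | succ k ih =>
    obtain ⟨o, hstep, ho⟩ := h.exists_squeezeStep
    obtain ⟨o', hiter, ho'⟩ := ih ho
    exact ⟨o', ⟨_, hstep, hiter⟩, by rwa [Nat.add_right_comm] at ho'⟩

theorem zigzagPath_eq_range' (h : SqueezeInvariant N a z (N ^ 2) l) :
    zigzagPath (a :: l) = List.range' a (z + 1 - a) := by
  have hn : ∀ p q, ¬ HasZShape (a :: l) p q := fun p q hpq => by
    obtain ⟨x, hx, hpot⟩ := h.potential_le p q hpq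
    have hxpos := List.count_pos_iff.mpr (hpq.uIcc_subset_zigzagPath hx)
    have hqpos := List.count_pos_iff.mpr (hpq.uIcc_subset_zigzagPath Set.right_mem_uIcc)
    have := Nat.le_mul_of_pos_right N hxpos
    omega
  rcases h.isZigzag.eq_nil_or_eq_singleton_of_forall_not_hasZShape h.mem_Icc h.getLast?_eq hn with
    ⟨rfl, rfl⟩ | rfl
  · simp [zigzagPath]
  · have haz : a ≤ z := (h.mem_Icc z (by simp)).1
    calc monoRun a z ++ [z] = List.Ico a z ++ [z] := by simp [monoRun, haz]
      _ = List.Ico a (z + 1) := (List.Ico.succ_top haz).symm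

end SqueezeInvariant

end Squeeze

section SeqAt

variable {s : List ℕ} {m N : ℕ}

theorem map_seqAt_range' (s : List ℕ) : (List.range' 1 s.length).map (seqAt s) = s := by
  apply List.ext_getElem (by simp)
  intro i _ hi
  simp [seqAt, List.getD_eq_getElem?_getD, hi]

theorem count_eq_card_filter_seqAt (s : List ℕ) (x : ℕ) :
    s.count x = ((Finset.Icc 1 s.length).filter fun i => seqAt s i = x).card := by
  conv_lhs => rw [← map_seqAt_range' s]
  rw [List.count, List.countP_map, List.countP_eq_length_filter]
  rfl

theorem seqAt_succ_eq_getElem {i : ℕ} (hi : i < s.length) : seqAt s (i + 1) = s[i] := by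
  simp [seqAt, List.getD_eq_getElem?_getD, hi]

namespace OneStep

theorem isChain (h : OneStep (seqAt s) s.length m) :
    s.IsChain fun x y => y = x + 1 ∨ x = y + 1 := by
  obtain ⟨-, -, -, -, hstep⟩ := h
  refine List.isChain_iff_getElem.mpr fun i hi => ?_
  have := hstep (i + 1) (by omega) hi
  rwa [seqAt_succ_eq_getElem hi, seqAt_succ_eq_getElem (Nat.lt_of_succ_lt hi)] at this

theorem exists_eq_cons (h : OneStep (seqAt s) s.length m) : ∃ s', s = 1 :: s' := by
  obtain ⟨hpos, hfirst, -⟩ := h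
  cases s with
  | nil => simp at hpos
  | cons x s => exact ⟨s, by rw [← hfirst]; rfl⟩

theorem getLast?_eq (h : OneStep (seqAt s) s.length m) : s.getLast? = some m := by
  obtain ⟨hpos, -, hlast, -⟩ := h
  rw [← hlast, List.getLast?_eq_getElem?, seqAt, List.getD_eq_getElem?_getD,
    List.getElem?_eq_getElem (by omega)]
  rfl

theorem mem_Icc (h : OneStep (seqAt s) s.length m) {x : ℕ} (hx : x ∈ s) : x ∈ Set.Icc 1 m := by
  obtain ⟨-, -, -, hbound, -⟩ := h
  obtain ⟨i, hi, rfl⟩ := List.getElem_of_mem hx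
  have := hbound (i + 1) (by omega) hi
  rwa [seqAt_succ_eq_getElem hi] at this

theorem exists_squeezeInvariant (h : OneStep (seqAt s) s.length m)
    (hN : KCrossing (seqAt s) s.length N) :
    ∃ l, zigzagPath (1 :: l) = s ∧ SqueezeInvariant N 1 m 0 l := by
  obtain ⟨s', rfl⟩ := h.exists_eq_cons
  obtain ⟨l, hl, hpath⟩ := exists_isZigzag_zigzagPath_eq h.isChain
  have hcount : ∀ x, (zigzagPath (1 :: l)).count x ≤ N := fun x => by
    rw [hpath, count_eq_card_filter_seqAt]
    exact hN x
  refine ⟨l, hpath, hl, fun x hx => h.mem_Icc ?_, ?_, hcount, fun p q _ => ?_⟩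
  · exact hpath ▸ subset_zigzagPath _ (List.mem_cons_of_mem _ hx)
  · rw [← getLast?_zigzagPath, hpath, h.getLast?_eq]
  · refine ⟨q, Set.right_mem_uIcc, ?_⟩
    have := Nat.mul_le_mul_left N (hcount q)
    have := hcount q
    rw [sq]
    omega

end OneStep

end SeqAt

/-- Lemma (removal): every `N`-crossing one-step sequence over `{1,…,m}` can be
reduced to the strictly increasing sequence `1, 2, …, m` by `N²` applications of
the squeeze operation. -/
theorem stmt9 (s : List ℕ) (m N : ℕ)
    (h1 : OneStep (seqAt s) s.length m)
    (hN : KCrossing (seqAt s) s.length N) :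
    ∃ s', SqueezeIter (N ^ 2) s s' ∧ s' = List.range' 1 m := by
  obtain ⟨l, hpath, hinv⟩ := h1.exists_squeezeInvariant hN
  obtain ⟨o, hiter, hfinal⟩ := hinv.exists_squeezeIter (N ^ 2)
  rw [zero_add] at hfinal
  refine ⟨zigzagPath (1 :: o), hpath ▸ hiter, ?_⟩
  rw [hfinal.zigzagPath_eq_range', Nat.add_sub_cancel]
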